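/- There exists a qubit strategy for the (2,3) REC whose average exclusion success probability equals (7+√2)/9; moreover it can be chosen with the third POVM elements vanishing, M₁₂ = M₂₂ = 0. -/

import Mathlib

/-!
Take the two measurements to be projective in the mutually unbiased Pauli bases `Z` and `X`, with
the outcome `2` never occurring. In Bloch coordinates (in the plane of `X` and `Z`) the outcomes
`0, 1` are the projectors with Bloch vector `±e_Z` (resp. `±e_X`). The best state for `(a₁, a₂)`
points opposite to the sum of the Bloch vectors of the outcomes to be excluded.

* If `a₁, a₂ ∈ {0, 1}` (four cases), the two outcomes are excluded with total probability
  `2 · (1 + 1/√2) / 2 = 1 + √2/2`.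
* If some `aᵢ = 2` (five cases), that exclusion is automatic and the state makes the other one
  certain, for a total of `2`.

Hence `p = (4 (1 + √2/2) + 5 · 2) / 18 = (7 + √2) / 9`. Positivity of all the matrices is the
single lemma `bloch_posSemidef`.
-/

open Matrix
open scoped ComplexOrder

/-- The states and POVMs form a valid qubit strategy for the `(2,3)` REC/RAC:
the states are positive semidefinite with unit trace, and each of the two decoding
triples is a POVM. -/
def IsQubitStrategy3 (ρ : Fin 3 → Fin 3 → Matrix (Fin 2) (Fin 2) ℂ)
    (M : Fin 2 → Fin 3 → Matrix (Fin 2) (Fin 2) ℂ) : Prop :=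
  (∀ a₁ a₂, (ρ a₁ a₂).PosSemidef ∧ (ρ a₁ a₂).trace = 1) ∧
  (∀ i c, (M i c).PosSemidef) ∧
  (∀ i, ∑ c : Fin 3, M i c = 1)

/-- Average exclusion success probability for the `(2,3)` REC with a qubit strategy. -/
noncomputable def pREC3 (ρ : Fin 3 → Fin 3 → Matrix (Fin 2) (Fin 2) ℂ)
    (M : Fin 2 → Fin 3 → Matrix (Fin 2) (Fin 2) ℂ) : ℝ :=
  (1 / 18) * ∑ a₁ : Fin 3, ∑ a₂ : Fin 3, ∑ i : Fin 2,
    (((1 - M i (if i = 0 then a₁ else a₂)) * ρ a₁ a₂).trace).re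

/-- The matrix `(1 + x X + z Z) / 2` with Bloch vector `(x, z)`, for the Pauli matrices `X`, `Z`. -/
noncomputable def bloch (x z : ℝ) : Matrix (Fin 2) (Fin 2) ℂ :=
  !![((1 + z) / 2 : ℝ), (x / 2 : ℝ); (x / 2 : ℝ), ((1 - z) / 2 : ℝ)]

/-- With `v = (a + b i, c + d i)`, the quadratic form of `bloch x z` is half of `A + z D + x C`,
where `A = |v₀|² + |v₁|²`, `D = |v₀|² - |v₁|²` and `C = 2 Re (v₀ conj v₁)` satisfy
`C² + D² ≤ A²`; Cauchy-Schwarz then gives nonnegativity. -/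
lemma bloch_posSemidef {x z : ℝ} (h : x ^ 2 + z ^ 2 ≤ 1) : (bloch x z).PosSemidef := by
  rw [Matrix.posSemidef_iff_dotProduct_mulVec]
  refine ⟨?_, fun v => ?_⟩
  · ext i j
    fin_cases i <;> fin_cases j <;> simp [bloch, Matrix.conjTranspose_apply]
  · set a := (v 0).re with ha
    set b := (v 0).im with hb
    set c := (v 1).re with hc
    set d := (v 1).im with hd
    have key : -(z * (a ^ 2 + b ^ 2 - c ^ 2 - d ^ 2) + x * (2 * (a * c + b * d)))
        ≤ a ^ 2 + b ^ 2 + c ^ 2 + d ^ 2 := by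
      apply le_of_sq_le_sq _ (by positivity)
      have h1 : (a ^ 2 + b ^ 2 - c ^ 2 - d ^ 2) ^ 2 + (2 * (a * c + b * d)) ^ 2
          ≤ (a ^ 2 + b ^ 2 + c ^ 2 + d ^ 2) ^ 2 := by
        nlinarith [sq_nonneg (a * d - b * c)]
      generalize a ^ 2 + b ^ 2 - c ^ 2 - d ^ 2 = D at *
      generalize 2 * (a * c + b * d) = C at *
      nlinarith [sq_nonneg (z * C - x * D), mul_le_mul_of_nonneg_right h
        (by positivity : 0 ≤ D ^ 2 + C ^ 2)]
    rw [Complex.le_def]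
    constructor
    · simp [bloch, dotProduct, Matrix.mulVec, Fin.sum_univ_two, ← ha, ← hb, ← hc, ← hd,
        -Complex.ofReal_div, -Complex.ofReal_add, -Complex.ofReal_sub]
      linarith
    · simp [bloch, dotProduct, Matrix.mulVec, Fin.sum_univ_two, ← ha, ← hb, ← hc, ← hd,
        -Complex.ofReal_div, -Complex.ofReal_add, -Complex.ofReal_sub]
      ring

lemma bloch_trace (x z : ℝ) : (bloch x z).trace = 1 := by
  simp [bloch, Matrix.trace_fin_two]
  ring

lemma bloch_add_neg (x z : ℝ) : bloch x z + bloch (-x) (-z) = 1 := by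
  ext i j
  fin_cases i <;> fin_cases j <;> simp [bloch] <;> ring

/-- The Born rule in Bloch coordinates, for the complement of the effect `bloch u w`. -/
lemma exclude_re (u w x z : ℝ) :
    (((1 - bloch u w) * bloch x z).trace).re = (1 - u * x - w * z) / 2 := by
  rw [← bloch_add_neg u w, add_sub_cancel_left]
  simp [bloch, Matrix.trace_fin_two,
    -Complex.ofReal_div, -Complex.ofReal_add, -Complex.ofReal_sub]
  ring

theorem stmt3 :
    ∃ (ρ : Fin 3 → Fin 3 → Matrix (Fin 2) (Fin 2) ℂ)
      (M : Fin 2 → Fin 3 → Matrix (Fin 2) (Fin 2) ℂ),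
      IsQubitStrategy3 ρ M ∧ M 0 2 = 0 ∧ M 1 2 = 0 ∧
      pREC3 ρ M = (7 + Real.sqrt 2) / 9 := by
  set r : ℝ := Real.sqrt 2 / 2 with hr
  have hr2 : r ^ 2 = 1 / 2 := by
    rw [hr, div_pow, Real.sq_sqrt (by norm_num)]; norm_num
  -- For `a₁ = a₂ = 2` every state is optimal; the maximally mixed one is used.
  refine ⟨![![bloch (-r) (-r), bloch r (-r), bloch 0 (-1)],
            ![bloch (-r) r, bloch r r, bloch 0 1],
            ![bloch (-1) 0, bloch 1 0, bloch 0 0]],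
          ![![bloch 0 1, bloch 0 (-1), 0], ![bloch 1 0, bloch (-1) 0, 0]],
          ⟨?_, ?_, ?_⟩, rfl, rfl, ?_⟩
  · intro a₁ a₂
    fin_cases a₁ <;> fin_cases a₂ <;>
      exact ⟨bloch_posSemidef (by nlinarith), bloch_trace _ _⟩
  · intro i c
    fin_cases i <;> fin_cases c <;>
      first
      | exact Matrix.PosSemidef.zero
      | exact bloch_posSemidef (by norm_num)
  · intro i
    fin_cases i
    · simpa [Fin.sum_univ_three] using bloch_add_neg 0 1
    · simpa [Fin.sum_univ_three] using bloch_add_neg 1 0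
  · simp [pREC3, Fin.sum_univ_three, Fin.sum_univ_two, exclude_re, bloch_trace]
    rw [hr]
    ring
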